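/- Let α_w, α_n ∈ (0,1) with α_w < α_n and let w : {1,…,n} → ℝ≥0 be weights with total weight W > 0. Then there exists a real number s > 0 such that the ticket assignment t defined by t i = ⌊w i·s + α_w⌋ satisfies the Weight Restriction condition with parameters (α_w, α_n). -/

import Mathlib

/-!
Rounding `w i * s + c` to `t i = ⌊w i * s + c⌋₊` costs a bounded amount, so `t i / s → w i` as
`s → ∞`. Hence `t(S) / s → w(S)` and `T / s → W`, and a strict inequality `w(S) < α * W` between
the limits passes to the ticket counts for all large `s`. There are only finitely many subsets
`S`, so one `s` serves them all.
-/

open Filter Topology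

section FloorAsymptotics

variable {β K : Type*} [Field K] [LinearOrder K] [IsStrictOrderedRing K] [FloorSemiring K]

theorem natCast_floor_le_max_zero (x : K) : (⌊x⌋₊ : K) ≤ max x 0 :=
  (Nat.cast_le.2 (Nat.floor_mono (le_max_left x 0))).trans (Nat.floor_le (le_max_right x 0))

theorem max_zero_sub_one_le_natCast_floor (x : K) : max x 0 - 1 ≤ (⌊x⌋₊ : K) :=
  sub_le_iff_le_add.2 (max_le (Nat.lt_floor_add_one x).le (by positivity))

theorem tendsto_natFloor_div [TopologicalSpace K] [OrderTopology K] {l : Filter β} {f g : β → K}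
    {a : K} (hg : Tendsto g l atTop) (hfg : Tendsto (fun x => f x / g x) l (𝓝 a)) :
    Tendsto (fun x => (⌊f x⌋₊ : K) / g x) l (𝓝 (max a 0)) := by
  have h_upper : Tendsto (fun x => max (f x / g x) 0) l (𝓝 (max a 0)) :=
    hfg.max tendsto_const_nhds
  have h_lower : Tendsto (fun x => max (f x / g x) 0 - (g x)⁻¹) l (𝓝 (max a 0)) := by
    simpa only [sub_zero, Pi.inv_apply] using h_upper.sub hg.inv_tendsto_atTop
  have h_max_div {x : β} (hx : 0 < g x) : max (f x / g x) 0 = max (f x) 0 / g x := by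
    rw [← max_div_div_right hx.le, zero_div]
  refine tendsto_of_tendsto_of_tendsto_of_le_of_le' h_lower h_upper ?_ ?_ <;>
    filter_upwards [hg.eventually_gt_atTop 0] with x hx <;> rw [h_max_div hx]
  · rw [← one_div, ← sub_div]
    gcongr
    exact max_zero_sub_one_le_natCast_floor (f x)
  · gcongr
    exact natCast_floor_le_max_zero (f x)

theorem tendsto_natFloor_mul_add_div_atTop [TopologicalSpace K] [OrderTopology K] {a : K}
    (ha : 0 ≤ a) (c : K) :
    Tendsto (fun s : K => (⌊a * s + c⌋₊ : K) / s) atTop (𝓝 a) := by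
  have h_linear : Tendsto (fun s : K => (a * s + c) / s) atTop (𝓝 a) := by
    have h_limit : Tendsto (fun s : K => a + c / s) atTop (𝓝 a) := by
      simpa only [add_zero, id_eq] using (tendsto_id.const_div_atTop c).const_add a
    refine h_limit.congr' ?_
    filter_upwards [eventually_ne_atTop 0] with s hs
    rw [add_div, mul_div_cancel_right₀ a hs]
  simpa only [max_eq_left ha, id_eq] using tendsto_natFloor_div tendsto_id h_linear

theorem tendsto_sum_natFloor_mul_add_div_atTop [TopologicalSpace K] [OrderTopology K]
    {ι : Type*} {S : Finset ι} {w : ι → K} (hw : ∀ i ∈ S, 0 ≤ w i) (c : K) :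
    Tendsto (fun s : K => ((∑ i ∈ S, ⌊w i * s + c⌋₊ : ℕ) : K) / s) atTop (𝓝 (∑ i ∈ S, w i)) := by
  simp only [Nat.cast_sum, Finset.sum_div]
  exact tendsto_finsetSum S fun i hi => tendsto_natFloor_mul_add_div_atTop (hw i hi) c

end FloorAsymptotics

section WeightRestriction

variable {ι K : Type*} [Fintype ι] [Field K] [LinearOrder K] [IsStrictOrderedRing K]

/-- The Weight Restriction condition for weights `w` and tickets `t`: every set of parties holding
less than the fraction `αw` of the total weight holds less than the fraction `αn` of the tickets. -/
def WeightRestriction (w : ι → K) (t : ι → ℕ) (αw αn : K) : Prop :=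
  ∀ S : Finset ι, ∑ i ∈ S, w i < αw * ∑ i, w i →
    ((∑ i ∈ S, t i : ℕ) : K) < αn * ((∑ i, t i : ℕ) : K)

theorem WeightRestriction.anti_left {w : ι → K} {t : ι → ℕ} {αw αw' αn : K}
    (h : WeightRestriction w t αw' αn) (hα : αw ≤ αw') (hW : 0 ≤ ∑ i, w i) :
    WeightRestriction w t αw αn :=
  fun S hS => h S (hS.trans_le (mul_le_mul_of_nonneg_right hα hW))

theorem exists_valid_scale_general [FloorSemiring K] {w : ι → K} (hw : ∀ i, 0 ≤ w i) (α c : K) :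
    ∀ᶠ s : K in atTop, WeightRestriction w (fun i => ⌊w i * s + c⌋₊) α α := by
  let _ : TopologicalSpace K := Preorder.topology K
  have _ : OrderTopology K := ⟨rfl⟩
  refine eventually_all.2 fun S => eventually_imp_distrib_left.2 fun hS => ?_
  have h_subset := tendsto_sum_natFloor_mul_add_div_atTop (S := S) (fun i _ => hw i) c
  have h_total := tendsto_sum_natFloor_mul_add_div_atTop (S := Finset.univ) (fun i _ => hw i) c
  filter_upwards [h_subset.eventually_lt (h_total.const_mul α) hS, eventually_gt_atTop 0]
    with s h_ratio hs
  rwa [← mul_div_assoc, div_lt_div_iff_of_pos_right hs] at h_ratio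

end WeightRestriction

/-- There exists a scale `s > 0` such that the ticket assignment
`t i = ⌊w i · s + αw⌋` satisfies the Weight Restriction condition with
parameters `(αw, αn)`. -/
theorem exists_valid_scale
    (αw αn : ℝ) (hαw0 : 0 < αw) (hαw1 : αw < 1)
    (hαn0 : 0 < αn) (hαn1 : αn < 1) (hlt : αw < αn)
    (n : ℕ) (w : Fin n → ℝ) (hw : ∀ i, 0 ≤ w i)
    (hW : 0 < ∑ i, w i) :
    ∃ s : ℝ, 0 < s ∧
      ∀ S : Finset (Fin n),
        (∑ i ∈ S, w i) < αw * (∑ i, w i) →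
        ((∑ i ∈ S, (⌊w i * s + αw⌋₊ : ℕ) : ℕ) : ℝ) <
          αn * ((∑ i, (⌊w i * s + αw⌋₊ : ℕ) : ℕ) : ℝ) := by
  obtain ⟨s, hs, h⟩ :=
    ((eventually_gt_atTop 0).and (exists_valid_scale_general hw αn αw)).exists
  exact ⟨s, hs, h.anti_left hlt.le hW.le⟩
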